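/- Suppose α_1 = 1, 0 ≤ α_t < 1 for all t > 1, and let q ∈ (0,1). Then the stochastic AMP iterates (with arbitrary perturbation vectors Δ_G^t, Δ_H^{2t−1}, Δ_H^{2t} ∈ E*) satisfy, for every t ≥ 1 and every u ∈ Z: (1/Γ_t) Q(w_{t+1}^{ag}, u) ≤ B_t(u, r_{[t]}) − Σ_{i=1}^t (α_i/(2Γ_i γ_i)) (qμ − L_G α_i γ_i − 3L_H² γ_i²/μ) ‖r_i − w_{i+1}‖² + Σ_{i=1}^t Λ_i(u), where Λ_i(u) := (3α_iγ_i/(2μΓ_i))(‖Δ_H^{2i}‖_*² + ‖Δ_H^{2i−1}‖_*²) − ((1−q)μα_i/(2Γ_iγ_i))‖r_i − w_{i+1}‖² − (α_i/Γ_i)⟨Δ_H^{2i} + Δ_G^i, w_{i+1} − u⟩. -/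

import Mathlib

/-!
At step `t` both `w_{t+1}` and `r_{t+1}` are prox-points centred at `r_t`, for two different dual
vectors `η₁` and `η₂`. Adding the first-order optimality conditions of the two, that of `r_{t+1}`
tested at `u` and that of `w_{t+1}` tested at `r_{t+1}`, leaves `V (r_t, u) - V (r_{t+1}, u)` at the
price `⟨η₂ - η₁, w_{t+1} - r_{t+1}⟩`. Young's inequality pays for it with `V (w_{t+1}, r_{t+1})` and
`‖η₂ - η₁‖² / (2μ)`, and the latter is controlled by the Lipschitz constant of `H` and the
perturbations. Smoothness of `G` along the averaged iterates turns this into a recursion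
`Q_{t+1} ≤ (1 - α_t) Q_t + α_t b_t`, which is summed after division by `Γ_t`.
-/

theorem norm_add₃_sq_le {E : Type*} [SeminormedAddCommGroup E] (a b c : E) :
    ‖a + b + c‖ ^ 2 ≤ 3 * (‖a‖ ^ 2 + ‖b‖ ^ 2 + ‖c‖ ^ 2) :=
  calc ‖a + b + c‖ ^ 2 ≤ (‖a‖ + ‖b‖ + ‖c‖) ^ 2 := by gcongr; exact norm_add₃_le
    _ ≤ 3 * (‖a‖ ^ 2 + ‖b‖ ^ 2 + ‖c‖ ^ 2) := by
      linarith [sq_nonneg (‖a‖ - ‖b‖), sq_nonneg (‖a‖ - ‖c‖), sq_nonneg (‖b‖ - ‖c‖)]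

theorem apply_le_sq_norm_div_add_sq_norm {E : Type*} [SeminormedAddCommGroup E] [NormedSpace ℝ E]
    {μ : ℝ} (hμ : 0 < μ) (f : E →L[ℝ] ℝ) (x : E) :
    f x ≤ ‖f‖ ^ 2 / (2 * μ) + μ / 2 * ‖x‖ ^ 2 := by
  have hfx : f x ≤ ‖f‖ * ‖x‖ := (Real.le_norm_self _).trans (f.le_opNorm x)
  have hsq : ‖f‖ ^ 2 / (2 * μ) + μ / 2 * ‖x‖ ^ 2 - ‖f‖ * ‖x‖ = (‖f‖ - μ * ‖x‖) ^ 2 / (2 * μ) := by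
    field_simp
    ring
  have hnonneg : 0 ≤ (‖f‖ - μ * ‖x‖) ^ 2 / (2 * μ) := by positivity
  linarith

theorem div_le_sum_Icc_div_of_le_one_sub_mul_add {K : Type*} [Field K] [LinearOrder K]
    [IsStrictOrderedRing K] {α Γ a b : ℕ → K}
    (hΓ1 : Γ 1 = 1) (hΓrec : ∀ t ≥ 2, Γ t = (1 - α t) * Γ (t - 1))
    (hα1 : α 1 = 1) (hαlt : ∀ t ≥ 2, α t < 1)
    (hab : ∀ t ≥ 1, a (t + 1) ≤ (1 - α t) * a t + b t) {t : ℕ} (ht : 1 ≤ t) :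
    a (t + 1) / Γ t ≤ ∑ i ∈ Finset.Icc 1 t, b i / Γ i := by
  suffices 0 < Γ t ∧ a (t + 1) / Γ t ≤ ∑ i ∈ Finset.Icc 1 t, b i / Γ i from this.2
  induction t, ht using Nat.le_induction with
  | base => simpa [hΓ1, hα1] using hab 1 le_rfl
  | succ n hn ih =>
    obtain ⟨hΓn, ih⟩ := ih
    have hα : 0 < 1 - α (n + 1) := sub_pos.2 (hαlt _ (by lia))
    have hΓ : Γ (n + 1) = (1 - α (n + 1)) * Γ n := hΓrec _ (by lia)
    have hΓpos : 0 < Γ (n + 1) := hΓ ▸ mul_pos hα hΓn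
    refine ⟨hΓpos, ?_⟩
    calc a (n + 1 + 1) / Γ (n + 1)
        ≤ ((1 - α (n + 1)) * a (n + 1) + b (n + 1)) / Γ (n + 1) := by
          gcongr; exact hab _ (by lia)
      _ = a (n + 1) / Γ n + b (n + 1) / Γ (n + 1) := by
          rw [add_div, hΓ, mul_div_mul_left _ _ hα.ne']
      _ ≤ ∑ i ∈ Finset.Icc 1 (n + 1), b i / Γ i := by
          rw [Finset.sum_Icc_succ_top (by lia)]
          gcongr

section

variable {E : Type*} [NormedAddCommGroup E] [NormedSpace ℝ E]

theorem nonneg_of_isMinOn_add_of_convexOn {Z : Set E} {f J : E → ℝ} {f' : E →L[ℝ] ℝ} {p u : E}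
    (hmin : IsMinOn (fun x => f x + J x) Z p) (hf : HasFDerivWithinAt f f' Z p)
    (hJ : ConvexOn ℝ Z J) (hp : p ∈ Z) (hu : u ∈ Z) :
    0 ≤ f' (u - p) + (J u - J p) := by
  -- `J` need not be differentiable; on its epigraph it becomes the linear functional `Prod.snd`.
  let epi : Set (E × ℝ) := {x | x.1 ∈ Z ∧ J x.1 ≤ x.2}
  have hmin_epi : IsMinOn (fun x : E × ℝ => f x.1 + x.2) epi (p, J p) := fun x hx =>
    (hmin hx.1).trans (add_le_add_right hx.2 _)
  have hderiv : HasFDerivWithinAt (fun x : E × ℝ => f x.1 + x.2)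
      (f'.comp (.fst ℝ E ℝ) + .snd ℝ E ℝ) epi (p, J p) :=
    (HasFDerivWithinAt.comp (p, J p) hf hasFDerivWithinAt_fst fun _ hx => hx.1).add
      hasFDerivWithinAt_snd
  have hsegment : segment ℝ (p, J p) (u, J u) ⊆ epi :=
    hJ.convex_epigraph.segment_subset ⟨hp, le_rfl⟩ ⟨hu, le_rfl⟩
  exact hmin_epi.localize.hasFDerivWithinAt_nonneg hderiv
    (sub_mem_posTangentConeAt_of_segment_subset hsegment)

/-- The Bregman divergence `V(z, u)` of `ω`, the centre `z` coming first. The derivative of `ω` is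
passed as `Dω`, since `ω` is only differentiable within a set that may have empty interior. -/
noncomputable def bregmanDiv (ω : E → ℝ) (Dω : E → E →L[ℝ] ℝ) (z u : E) : ℝ :=
  ω u - ω z - Dω z (u - z)

/-- `p` is a value of the prox-mapping `P_z^J(η)` on `Z` with distance `V`. This is a relation, so
that neither existence nor uniqueness of the minimizer is presupposed. -/
def IsProxPoint (Z : Set E) (V : E → E → ℝ) (J : E → ℝ) (z : E) (η : E →L[ℝ] ℝ) (p : E) : Prop :=
  p ∈ Z ∧ IsMinOn (fun u => η (u - z) + V z u + J u) Z p

variable {Z : Set E} {ω : E → ℝ} {Dω : E → E →L[ℝ] ℝ} {J : E → ℝ}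

theorem bregmanDiv_sub_sub (z p u : E) :
    bregmanDiv ω Dω z u - bregmanDiv ω Dω z p - bregmanDiv ω Dω p u = (Dω p - Dω z) (u - p) := by
  simp only [bregmanDiv, sub_apply, map_sub]
  ring

theorem IsProxPoint.apply_sub_add_sub_le {z p u : E} {η : E →L[ℝ] ℝ}
    (h : IsProxPoint Z (bregmanDiv ω Dω) J z η p) (hω : HasFDerivWithinAt ω (Dω p) Z p)
    (hJ : ConvexOn ℝ Z J) (hu : u ∈ Z) :
    η (p - u) + J p - J u ≤
      bregmanDiv ω Dω z u - bregmanDiv ω Dω z p - bregmanDiv ω Dω p u := by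
  have hderiv : HasFDerivWithinAt (fun x => η (x - z) + bregmanDiv ω Dω z x)
      (η + (Dω p - Dω z)) Z p := by
    simp only [bregmanDiv, map_sub]
    exact (η.hasFDerivWithinAt.sub_const (η z)).add
      ((hω.sub_const (ω z)).sub ((Dω z).hasFDerivWithinAt.sub_const (Dω z z)))
  have hopt := nonneg_of_isMinOn_add_of_convexOn h.2 hderiv hJ h.1 hu
  rw [bregmanDiv_sub_sub]
  simp only [add_apply, sub_apply, map_sub] at hopt ⊢
  linarith

theorem IsProxPoint.extragradient_le {μ : ℝ} (hμ : 0 < μ)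
    (hω : ∀ z ∈ Z, HasFDerivWithinAt ω (Dω z) Z z)
    (hV : ∀ z ∈ Z, ∀ u ∈ Z, μ / 2 * ‖u - z‖ ^ 2 ≤ bregmanDiv ω Dω z u) (hJ : ConvexOn ℝ Z J)
    {z w r u : E} {η₁ η₂ : E →L[ℝ] ℝ} (hz : z ∈ Z)
    (hw : IsProxPoint Z (bregmanDiv ω Dω) J z η₁ w)
    (hr : IsProxPoint Z (bregmanDiv ω Dω) J z η₂ r) (hu : u ∈ Z) :
    η₂ (w - u) + J w - J u ≤
      bregmanDiv ω Dω z u - bregmanDiv ω Dω r u - μ / 2 * ‖z - w‖ ^ 2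
        + ‖η₂ - η₁‖ ^ 2 / (2 * μ) := by
  have hw_opt := hw.apply_sub_add_sub_le (hω w hw.1) hJ hr.1
  have hr_opt := hr.apply_sub_add_sub_le (hω r hr.1) hJ hu
  have hVzw := hV z hz w hw.1
  have hVwr := hV w hw.1 r hr.1
  have hyoung := apply_le_sq_norm_div_add_sq_norm hμ (η₂ - η₁) (w - r)
  rw [norm_sub_rev w z] at hVzw
  rw [norm_sub_rev r w] at hVwr
  simp only [sub_apply, map_sub] at hw_opt hr_opt hyoung ⊢
  linarith

/-- The gap `Q(v, u)` of the composite variational inequality with smooth convex part `G`, monotone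
operator `H` and simple convex part `J`. -/
noncomputable def compositeGap (G : E → ℝ) (H : E → E →L[ℝ] ℝ) (J : E → ℝ) (v u : E) : ℝ :=
  G v - G u + H u (v - u) + J v - J u

variable {G : E → ℝ} {DG : E → E →L[ℝ] ℝ} {L : ℝ} {a z w u : E} {β : ℝ}

theorem smooth_convex_averaging_le (hZ : Convex ℝ Z)
    (hsmooth : ∀ v ∈ Z, ∀ x ∈ Z, G v ≤ G x + DG x (v - x) + L / 2 * ‖v - x‖ ^ 2)
    (hconvex : ∀ v ∈ Z, ∀ x ∈ Z, G x + DG x (v - x) ≤ G v)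
    (ha : a ∈ Z) (hz : z ∈ Z) (hw : w ∈ Z) (hu : u ∈ Z) (hβ : β ∈ Set.Icc (0 : ℝ) 1) :
    G ((1 - β) • a + β • w) ≤ (1 - β) * G a
      + β * (G u + DG ((1 - β) • a + β • z) (w - u)) + L / 2 * β ^ 2 * ‖z - w‖ ^ 2 := by
  have hβ' : 0 ≤ 1 - β := sub_nonneg.2 hβ.2
  have hmem {x : E} (hx : x ∈ Z) : (1 - β) • a + β • x ∈ Z :=
    hZ ha hx hβ' hβ.1 (sub_add_cancel 1 β)
  have hupper := hsmooth _ (hmem hw) _ (hmem hz)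
  have hlower_a := mul_le_mul_of_nonneg_left (hconvex a ha _ (hmem hz)) hβ'
  have hlower_u := mul_le_mul_of_nonneg_left (hconvex u hu _ (hmem hz)) hβ.1
  have hnorm : ‖(1 - β) • a + β • w - ((1 - β) • a + β • z)‖ ^ 2 = β ^ 2 * ‖z - w‖ ^ 2 := by
    rw [add_sub_add_left_eq_sub, ← smul_sub, norm_smul, mul_pow, norm_sub_rev, Real.norm_eq_abs,
      sq_abs]
  rw [hnorm] at hupper
  generalize DG ((1 - β) • a + β • z) = g at *
  simp only [map_sub, map_add, map_smul, smul_eq_mul] at hupper hlower_a hlower_u ⊢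
  linarith

theorem compositeGap_averaging_le {H : E → E →L[ℝ] ℝ} (hJ : ConvexOn ℝ Z J)
    (hsmooth : ∀ v ∈ Z, ∀ x ∈ Z, G v ≤ G x + DG x (v - x) + L / 2 * ‖v - x‖ ^ 2)
    (hconvex : ∀ v ∈ Z, ∀ x ∈ Z, G x + DG x (v - x) ≤ G v)
    (hmono : ∀ v ∈ Z, ∀ x ∈ Z, 0 ≤ (H x - H v) (x - v))
    (ha : a ∈ Z) (hz : z ∈ Z) (hw : w ∈ Z) (hu : u ∈ Z) (hβ : β ∈ Set.Icc (0 : ℝ) 1) :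
    compositeGap G H J ((1 - β) • a + β • w) u ≤ (1 - β) * compositeGap G H J a u
      + β * (DG ((1 - β) • a + β • z) (w - u) + H w (w - u) + J w - J u)
      + L / 2 * β ^ 2 * ‖z - w‖ ^ 2 := by
  have hG_le := smooth_convex_averaging_le hJ.1 hsmooth hconvex ha hz hw hu hβ
  have hH_le := mul_le_mul_of_nonneg_left (hmono u hu w hw) hβ.1
  have hJ_le := hJ.2 ha hw (sub_nonneg.2 hβ.2) hβ.1 (sub_add_cancel 1 β)
  simp only [compositeGap, sub_apply, map_sub, map_add, map_smul,
    smul_eq_mul] at hG_le hH_le hJ_le ⊢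
  linarith

/-- The sequences `r`, `w`, `wag`, `wmd` are iterates of the stochastic accelerated mirror-prox
method with stepsizes `α`, `γ` and perturbations `ΔG`, `ΔH`. Iterates are numbered from `1`; values
at index `0` are irrelevant. -/
structure IsStochasticAMP (Z : Set E) (V : E → E → ℝ) (J : E → ℝ) (DG H : E → E →L[ℝ] ℝ)
    (α γ : ℕ → ℝ) (ΔG ΔH : ℕ → E →L[ℝ] ℝ) (r w wag wmd : ℕ → E) : Prop where
  r_one_mem : r 1 ∈ Z
  wag_one : wag 1 = r 1
  wmd_eq : ∀ t ≥ 1, wmd t = (1 - α t) • wag t + α t • r t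
  w_succ : ∀ t ≥ 1, IsProxPoint Z V (fun u => γ t * J u) (r t)
    (γ t • (H (r t) + ΔH (2 * t - 1) + (DG (wmd t) + ΔG t))) (w (t + 1))
  r_succ : ∀ t ≥ 1, IsProxPoint Z V (fun u => γ t * J u) (r t)
    (γ t • (H (w (t + 1)) + ΔH (2 * t) + (DG (wmd t) + ΔG t))) (r (t + 1))
  wag_succ : ∀ t ≥ 1, wag (t + 1) = (1 - α t) • wag t + α t • w (t + 1)

namespace IsStochasticAMP

variable {V : E → E → ℝ} {H : E → E →L[ℝ] ℝ} {α γ : ℕ → ℝ} {ΔG ΔH : ℕ → E →L[ℝ] ℝ}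
  {r w wag wmd : ℕ → E} {μ LG LH : ℝ} {t : ℕ}

theorem r_mem (h : IsStochasticAMP Z V J DG H α γ ΔG ΔH r w wag wmd) (ht : 1 ≤ t) : r t ∈ Z := by
  cases t, ht using Nat.le_induction with
  | base => exact h.r_one_mem
  | succ n hn => exact (h.r_succ n hn).1

theorem wag_mem (h : IsStochasticAMP Z V J DG H α γ ΔG ΔH r w wag wmd) (hZ : Convex ℝ Z)
    (hα : ∀ t ≥ 1, α t ∈ Set.Icc (0 : ℝ) 1) (ht : 1 ≤ t) : wag t ∈ Z := by
  induction t, ht using Nat.le_induction with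
  | base => exact h.wag_one ▸ h.r_one_mem
  | succ n hn ih =>
    rw [h.wag_succ n hn]
    exact hZ ih (h.w_succ n hn).1 (sub_nonneg.2 (hα n hn).2) (hα n hn).1 (sub_add_cancel 1 _)

theorem norm_dual_diff_sq_le (h : IsStochasticAMP Z V J DG H α γ ΔG ΔH r w wag wmd)
    (hlip : ∀ v ∈ Z, ∀ x ∈ Z, ‖H x - H v‖ ≤ LH * ‖x - v‖) (ht : 1 ≤ t) :
    ‖γ t • (H (w (t + 1)) + ΔH (2 * t) + (DG (wmd t) + ΔG t))
        - γ t • (H (r t) + ΔH (2 * t - 1) + (DG (wmd t) + ΔG t))‖ ^ 2 ≤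
      3 * γ t ^ 2 * (LH ^ 2 * ‖r t - w (t + 1)‖ ^ 2
        + ‖ΔH (2 * t)‖ ^ 2 + ‖ΔH (2 * t - 1)‖ ^ 2) := by
  have hdiff : γ t • (H (w (t + 1)) + ΔH (2 * t) + (DG (wmd t) + ΔG t))
        - γ t • (H (r t) + ΔH (2 * t - 1) + (DG (wmd t) + ΔG t)) =
      γ t • (H (w (t + 1)) - H (r t) + ΔH (2 * t) + -ΔH (2 * t - 1)) := by
    module
  have hH : ‖H (w (t + 1)) - H (r t)‖ ^ 2 ≤ LH ^ 2 * ‖r t - w (t + 1)‖ ^ 2 := by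
    rw [← mul_pow, norm_sub_rev (r t)]
    gcongr
    exact hlip _ (h.r_mem ht) _ (h.w_succ t ht).1
  rw [hdiff, norm_smul, mul_pow, Real.norm_eq_abs, sq_abs, mul_comm 3, mul_assoc]
  gcongr
  refine (norm_add₃_sq_le _ _ _).trans ?_
  rw [norm_neg]
  gcongr

theorem prox_step_le
    (h : IsStochasticAMP Z (bregmanDiv ω Dω) J DG H α γ ΔG ΔH r w wag wmd) (hμ : 0 < μ)
    (hω : ∀ z ∈ Z, HasFDerivWithinAt ω (Dω z) Z z)
    (hV : ∀ z ∈ Z, ∀ u ∈ Z, μ / 2 * ‖u - z‖ ^ 2 ≤ bregmanDiv ω Dω z u) (hJ : ConvexOn ℝ Z J)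
    (hlip : ∀ v ∈ Z, ∀ x ∈ Z, ‖H x - H v‖ ≤ LH * ‖x - v‖)
    (ht : 1 ≤ t) (hγ : 0 < γ t) (hu : u ∈ Z) :
    (H (w (t + 1)) + ΔH (2 * t) + (DG (wmd t) + ΔG t)) (w (t + 1) - u) + J (w (t + 1)) - J u ≤
      (bregmanDiv ω Dω (r t) u - bregmanDiv ω Dω (r (t + 1)) u) / γ t
        - (μ - 3 * LH ^ 2 * γ t ^ 2 / μ) / (2 * γ t) * ‖r t - w (t + 1)‖ ^ 2
        + 3 * γ t / (2 * μ) * (‖ΔH (2 * t)‖ ^ 2 + ‖ΔH (2 * t - 1)‖ ^ 2) := by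
  have hprox := (h.w_succ t ht).extragradient_le hμ hω hV (hJ.smul hγ.le) (h.r_mem ht)
    (h.r_succ t ht) hu
  have hdual := div_le_div_of_nonneg_right (h.norm_dual_diff_sq_le hlip ht)
    (by positivity : 0 ≤ 2 * μ)
  rw [smul_apply, smul_eq_mul, smul_eq_mul, smul_eq_mul] at hprox
  have hscaled : γ t * ((H (w (t + 1)) + ΔH (2 * t) + (DG (wmd t) + ΔG t)) (w (t + 1) - u)
        + J (w (t + 1)) - J u) ≤
      bregmanDiv ω Dω (r t) u - bregmanDiv ω Dω (r (t + 1)) u - μ / 2 * ‖r t - w (t + 1)‖ ^ 2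
        + 3 * γ t ^ 2 * (LH ^ 2 * ‖r t - w (t + 1)‖ ^ 2
          + ‖ΔH (2 * t)‖ ^ 2 + ‖ΔH (2 * t - 1)‖ ^ 2) / (2 * μ) := by
    linarith
  refine le_of_mul_le_mul_left (hscaled.trans_eq ?_) hγ
  field_simp
  ring

theorem compositeGap_succ_le
    (h : IsStochasticAMP Z (bregmanDiv ω Dω) J DG H α γ ΔG ΔH r w wag wmd) (hμ : 0 < μ)
    (hω : ∀ z ∈ Z, HasFDerivWithinAt ω (Dω z) Z z)
    (hV : ∀ z ∈ Z, ∀ u ∈ Z, μ / 2 * ‖u - z‖ ^ 2 ≤ bregmanDiv ω Dω z u) (hJ : ConvexOn ℝ Z J)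
    (hsmooth : ∀ v ∈ Z, ∀ x ∈ Z, G v ≤ G x + DG x (v - x) + LG / 2 * ‖v - x‖ ^ 2)
    (hconvex : ∀ v ∈ Z, ∀ x ∈ Z, G x + DG x (v - x) ≤ G v)
    (hmono : ∀ v ∈ Z, ∀ x ∈ Z, 0 ≤ (H x - H v) (x - v))
    (hlip : ∀ v ∈ Z, ∀ x ∈ Z, ‖H x - H v‖ ≤ LH * ‖x - v‖)
    (hα : ∀ t ≥ 1, α t ∈ Set.Icc (0 : ℝ) 1) (ht : 1 ≤ t) (hγ : 0 < γ t) (hu : u ∈ Z) :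
    compositeGap G H J (wag (t + 1)) u ≤ (1 - α t) * compositeGap G H J (wag t) u
      + α t * ((bregmanDiv ω Dω (r t) u - bregmanDiv ω Dω (r (t + 1)) u) / γ t
        - (μ - LG * α t * γ t - 3 * LH ^ 2 * γ t ^ 2 / μ) / (2 * γ t) * ‖r t - w (t + 1)‖ ^ 2
        + 3 * γ t / (2 * μ) * (‖ΔH (2 * t)‖ ^ 2 + ‖ΔH (2 * t - 1)‖ ^ 2)
        - (ΔH (2 * t) + ΔG t) (w (t + 1) - u)) := by
  have hgap := compositeGap_averaging_le hJ hsmooth hconvex hmono (h.wag_mem hJ.1 hα ht)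
    (h.r_mem ht) (h.w_succ t ht).1 hu (hα t ht)
  have hprox := mul_le_mul_of_nonneg_left (h.prox_step_le hμ hω hV hJ hlip ht hγ hu) (hα t ht).1
  rw [← h.wag_succ t ht, ← h.wmd_eq t ht] at hgap
  have hLG : LG * α t * γ t / (2 * γ t) = LG / 2 * α t := by field_simp
  simp only [add_apply, sub_div _ _ (2 * γ t), hLG] at hprox ⊢
  linarith

end IsStochasticAMP

end

theorem stochastic_amp_master_Q_bound_general
    {E : Type*} [NormedAddCommGroup E] [NormedSpace ℝ E] {Z : Set E} {μ : ℝ} (hμ : 0 < μ)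
    {ω : E → ℝ} {Dω : E → E →L[ℝ] ℝ} (hω : ∀ z ∈ Z, HasFDerivWithinAt ω (Dω z) Z z)
    (hV : ∀ z ∈ Z, ∀ u ∈ Z, μ / 2 * ‖u - z‖ ^ 2 ≤ bregmanDiv ω Dω z u)
    {J : E → ℝ} (hJ : ConvexOn ℝ Z J)
    {G : E → ℝ} {DG : E → E →L[ℝ] ℝ} {LG : ℝ}
    (hsmooth : ∀ v ∈ Z, ∀ x ∈ Z, G v ≤ G x + DG x (v - x) + LG / 2 * ‖v - x‖ ^ 2)
    (hconvex : ∀ v ∈ Z, ∀ x ∈ Z, G x + DG x (v - x) ≤ G v)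
    {H : E → E →L[ℝ] ℝ} {LH : ℝ}
    (hmono : ∀ v ∈ Z, ∀ x ∈ Z, 0 ≤ (H x - H v) (x - v))
    (hlip : ∀ v ∈ Z, ∀ x ∈ Z, ‖H x - H v‖ ≤ LH * ‖x - v‖)
    {α γ : ℕ → ℝ} (hα : ∀ t ≥ 1, α t ∈ Set.Icc (0 : ℝ) 1) (hγ : ∀ t ≥ 1, 0 < γ t)
    {ΔG ΔH : ℕ → E →L[ℝ] ℝ} {r w wag wmd : ℕ → E}
    (h : IsStochasticAMP Z (bregmanDiv ω Dω) J DG H α γ ΔG ΔH r w wag wmd)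
    {Γ : ℕ → ℝ} (hΓ1 : Γ 1 = 1) (hΓrec : ∀ t ≥ 2, Γ t = (1 - α t) * Γ (t - 1))
    (hα1 : α 1 = 1) (hαlt : ∀ t ≥ 2, α t < 1) (q : ℝ) {t : ℕ} (ht : 1 ≤ t) {u : E} (hu : u ∈ Z) :
    1 / Γ t * compositeGap G H J (wag (t + 1)) u ≤
      (∑ i ∈ Finset.Icc 1 t,
          α i / (Γ i * γ i) * (bregmanDiv ω Dω (r i) u - bregmanDiv ω Dω (r (i + 1)) u))
        - (∑ i ∈ Finset.Icc 1 t,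
            α i / (2 * Γ i * γ i) * (q * μ - LG * α i * γ i - 3 * LH ^ 2 * γ i ^ 2 / μ)
              * ‖r i - w (i + 1)‖ ^ 2)
        + ∑ i ∈ Finset.Icc 1 t,
            (3 * α i * γ i / (2 * μ * Γ i) * (‖ΔH (2 * i)‖ ^ 2 + ‖ΔH (2 * i - 1)‖ ^ 2)
              - (1 - q) * μ * α i / (2 * Γ i * γ i) * ‖r i - w (i + 1)‖ ^ 2
              - α i / Γ i * ((ΔH (2 * i) + ΔG i) (w (i + 1) - u))) := by
  have hsum := div_le_sum_Icc_div_of_le_one_sub_mul_add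
    (a := fun i => compositeGap G H J (wag i) u) hΓ1 hΓrec hα1 hαlt (fun i hi =>
      h.compositeGap_succ_le hμ hω hV hJ hsmooth hconvex hmono hlip hα hi (hγ i hi) hu) ht
  rw [one_div_mul_eq_div, ← Finset.sum_sub_distrib, ← Finset.sum_add_distrib]
  exact hsum.trans_eq (Finset.sum_congr rfl fun i _ => by ring)

open Finset in
/-- the master bound on `Q` for the stochastic AMP method. -/
theorem stochastic_amp_master_Q_bound
    {E : Type*} [NormedAddCommGroup E] [NormedSpace ℝ E] [FiniteDimensional ℝ E]
    (Z : Set E) (hZne : Z.Nonempty) (hZcl : IsClosed Z) (hZcv : Convex ℝ Z)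
    (μ : ℝ) (hμ : 0 < μ)
    (ω : E → ℝ) (Dω : E → E →L[ℝ] ℝ)
    (hωdiff : ∀ z ∈ Z, HasFDerivWithinAt ω (Dω z) Z z)
    (hωcont : ContinuousOn Dω Z)
    (hωsc : StrongConvexOn Z μ ω)
    (V : E → E → ℝ) (hV : ∀ z u, V z u = ω u - ω z - Dω z (u - z))
    (hVlb : ∀ z ∈ Z, ∀ u ∈ Z, μ / 2 * ‖u - z‖ ^ 2 ≤ V z u)
    (J : E → ℝ) (hJ : ConvexOn ℝ Z J)
    (G : E → ℝ) (DG : E → E →L[ℝ] ℝ) (LG : ℝ) (hLG : 0 ≤ LG)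
    (hGsmooth : ∀ v ∈ Z, ∀ x ∈ Z, G v ≤ G x + DG x (v - x) + LG / 2 * ‖v - x‖ ^ 2)
    (hGcvx : ∀ v ∈ Z, ∀ x ∈ Z, G x + DG x (v - x) ≤ G v)
    (H : E → E →L[ℝ] ℝ) (LH : ℝ) (hLH : 0 ≤ LH)
    (hHmono : ∀ v ∈ Z, ∀ x ∈ Z, 0 ≤ (H x - H v) (x - v))
    (hHlip : ∀ v ∈ Z, ∀ x ∈ Z, ‖H x - H v‖ ≤ LH * ‖x - v‖)
    (Q : E → E → ℝ)
    (hQ : ∀ a b, Q a b = G a - G b + (H b) (a - b) + J a - J b)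
    (α γ : ℕ → ℝ) (hαrange : ∀ t ≥ 1, 0 ≤ α t ∧ α t ≤ 1) (hγpos : ∀ t ≥ 1, 0 < γ t)
    (r w wag wmd : ℕ → E)
    (hr1Z : r 1 ∈ Z) (hw1 : w 1 = r 1) (hwag1 : wag 1 = r 1)
    (hwmd : ∀ t ≥ 1, wmd t = (1 - α t) • wag t + α t • r t)
    (ΔG ΔH : ℕ → E →L[ℝ] ℝ)
    (hwprox : ∀ t ≥ 1, w (t+1) ∈ Z ∧ IsMinOn
      (fun u => (γ t • (H (r t) + ΔH (2*t-1) + (DG (wmd t) + ΔG t))) (u - r t)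
        + V (r t) u + γ t * J u) Z (w (t+1)))
    (hrprox : ∀ t ≥ 1, r (t+1) ∈ Z ∧ IsMinOn
      (fun u => (γ t • (H (w (t+1)) + ΔH (2*t) + (DG (wmd t) + ΔG t))) (u - r t)
        + V (r t) u + γ t * J u) Z (r (t+1)))
    (hwagrec : ∀ t ≥ 1, wag (t+1) = (1 - α t) • wag t + α t • w (t+1))
    (Γ : ℕ → ℝ) (hΓ1 : Γ 1 = 1) (hΓrec : ∀ t ≥ 2, Γ t = (1 - α t) * Γ (t-1))
    (hα1 : α 1 = 1) (hαlt1 : ∀ t ≥ 2, α t < 1)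
    (q : ℝ) (hq : 0 < q ∧ q < 1) :
    ∀ t ≥ 1, ∀ u ∈ Z,
      1 / Γ t * Q (wag (t+1)) u ≤
        (∑ i ∈ Finset.Icc 1 t, α i / (Γ i * γ i) * (V (r i) u - V (r (i+1)) u))
          - (∑ i ∈ Finset.Icc 1 t,
              α i / (2 * Γ i * γ i) * (q * μ - LG * α i * γ i - 3 * LH ^ 2 * γ i ^ 2 / μ)
                * ‖r i - w (i+1)‖ ^ 2)
          + ∑ i ∈ Finset.Icc 1 t,
              (3 * α i * γ i / (2 * μ * Γ i) * (‖ΔH (2*i)‖ ^ 2 + ‖ΔH (2*i-1)‖ ^ 2)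
                - (1 - q) * μ * α i / (2 * Γ i * γ i) * ‖r i - w (i+1)‖ ^ 2
                - α i / Γ i * ((ΔH (2*i) + ΔG i) (w (i+1) - u))) := by
  obtain rfl : V = bregmanDiv ω Dω := funext₂ hV
  obtain rfl : Q = compositeGap G H J := funext₂ hQ
  exact fun t ht u hu => stochastic_amp_master_Q_bound_general hμ hωdiff hVlb hJ hGsmooth hGcvx
    hHmono hHlip hαrange hγpos ⟨hr1Z, hwag1, hwmd, hwprox, hrprox, hwagrec⟩ hΓ1 hΓrec hα1 hαlt1 q
    ht hu
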